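/- arXiv:1411.0363 — 2 statements merged into one kernel-verified Lean document; each statement's English description precedes it below -/
import Mathlib

section
/- Let U ⊆ ℂⁿ be a domain and suppose that for each boundary point a ∈ ∂U there is a nowhere-vanishing holomorphic function g_a on U which tends to zero at a, i.e. for every sequence {z_j} ⊆ U with z_j → a one has g_a(z_j) → 0. Then U is a domain of holomorphy. -/
open Set Metric Filter Topology

/-- A function `f`, holomorphic on the open set `U ⊆ ℂⁿ`, extends holomorphically to a point
`a`: there is a connected open neighbourhood `V` of `a` and a holomorphic `g` on `V` agreeing
with `f` on a nonempty open subset of `U ∩ V`. -/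
def ExtendsHolomorphicallyTo {n : ℕ} (U : Set (Fin n → ℂ)) (f : (Fin n → ℂ) → ℂ)
    (a : Fin n → ℂ) : Prop :=
  ∃ V : Set (Fin n → ℂ), IsOpen V ∧ IsConnected V ∧ a ∈ V ∧
    ∃ g : (Fin n → ℂ) → ℂ, DifferentiableOn ℂ g V ∧
      ∃ W : Set (Fin n → ℂ), IsOpen W ∧ W.Nonempty ∧ W ⊆ U ∩ V ∧ Set.EqOn f g W

/-- `U ⊆ ℂⁿ` is a domain of holomorphy: it is a domain (connected open set) and there exists a
holomorphic function on `U` which does not extend holomorphically to any point of `Uᶜ`. -/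
def IsDomainOfHolomorphy {n : ℕ} (U : Set (Fin n → ℂ)) : Prop :=
  IsOpen U ∧ IsConnected U ∧
    ∃ f : (Fin n → ℂ) → ℂ, DifferentiableOn ℂ f U ∧
      ∀ a ∈ Uᶜ, ¬ ExtendsHolomorphicallyTo U f a

/-!
The reciprocal of `g_a` is holomorphic on `U` and unbounded along every sequence in `U` tending to
the boundary point `a`. Holomorphic maps on `U` form a closed subspace of `C(U)`, which is
completely metrizable, so condensation of singularities turns countably many such unbounded
functions, one for each of countably many subsets of `U`, into a single `f` unbounded on each.
The subsets are chosen so that, whenever a connected open `V` leaves `U`, every component of `U ∩ V`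
contains some of them arbitrarily close to a boundary point `b ∈ V`. An extension `g` of `f` to `V`
agrees with `f` on a component of `U ∩ V`, yet `g` is bounded near `b`.
-/

section IdentityTheorem

variable {E F : Type*} [NormedAddCommGroup E] [NormedSpace ℂ E]
  [NormedAddCommGroup F] [NormedSpace ℂ F] [CompleteSpace F] {f g : E → F} {p : E}

theorem eqOn_of_convex_of_eventuallyEq {B : Set E} (hB : IsOpen B) (hBc : Convex ℝ B)
    (hf : DifferentiableOn ℂ f B) (hg : DifferentiableOn ℂ g B) (hp : p ∈ B)
    (hfg : f =ᶠ[𝓝 p] g) : EqOn f g B := by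
  intro z hz
  let line : ℂ → E := fun t => p + t • (z - p)
  have hline : Differentiable ℂ line := by fun_prop
  have hline₀ : line 0 = p := by simp [line]
  have hline₁ : line 1 = z := by simp [line]
  have hline_conn : IsPreconnected (line ⁻¹' B) :=
    ((hBc.translate_preimage_right p).linear_preimage
      ((LinearMap.toSpanSingleton ℂ E (z - p)).restrictScalars ℝ)).isPreconnected
  have hcomp {k : E → F} (hk : DifferentiableOn ℂ k B) :
      AnalyticOnNhd ℂ (k ∘ line) (line ⁻¹' B) :=
    (hk.comp hline.differentiableOn (mapsTo_preimage line B)).analyticOnNhd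
      (hB.preimage hline.continuous)
  have hfg₀ : f ∘ line =ᶠ[𝓝 0] g ∘ line :=
    (hline.continuous.tendsto' 0 p hline₀).eventually hfg
  have := (hcomp hf).eqOn_of_preconnected_of_eventuallyEq (hcomp hg) hline_conn
    (by rwa [mem_preimage, hline₀]) hfg₀ (show 1 ∈ line ⁻¹' B by rwa [mem_preimage, hline₁])
  simpa only [Function.comp_apply, hline₁] using this

theorem eqOn_of_isPreconnected_of_eventuallyEq {C : Set E} (hC : IsOpen C)
    (hCc : IsPreconnected C) (hf : DifferentiableOn ℂ f C) (hg : DifferentiableOn ℂ g C)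
    (hp : p ∈ C) (hfg : f =ᶠ[𝓝 p] g) : EqOn f g C := by
  suffices C ⊆ {z | f =ᶠ[𝓝 z] g} from fun z hz => (this hz).self_of_nhds
  refine hCc.subset_of_closure_inter_subset isOpen_setOfPred_eventually_nhds ⟨p, hp, hfg⟩ ?_
  rintro z ⟨hz, hzC⟩
  obtain ⟨r, hr, hball⟩ := Metric.isOpen_iff.1 hC z hzC
  obtain ⟨q, hq, hqfg⟩ := mem_closure_iff.1 hz (ball z r) isOpen_ball (mem_ball_self hr)
  exact (eqOn_of_convex_of_eventuallyEq isOpen_ball (convex_ball z r) (hf.mono hball)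
    (hg.mono hball) hq hqfg).eventuallyEq_of_mem (ball_mem_nhds z hr)

end IdentityTheorem

section LocallyUniformLimits

variable {E F ι : Type*} [NormedAddCommGroup E] [NormedSpace ℂ E]
  [NormedAddCommGroup F] [NormedSpace ℂ F] {l : Filter ι} {f : ι → E → F} {g : E → F}
  {c : E} {r : ℝ}

theorem norm_fderiv_le_of_forall_mem_ball_norm_le {M : ℝ} (hr : 0 < r)
    (hg : DifferentiableOn ℂ g (ball c r)) (hM : ∀ z ∈ ball c r, ‖g z‖ ≤ M) :
    ‖fderiv ℂ g c‖ ≤ 2 * M / r := by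
  refine Complex.norm_fderiv_le_div_of_mapsTo_ball hg (fun z hz => ?_) hr
  rw [mem_closedBall, dist_eq_norm, two_mul]
  exact norm_sub_le_of_le (hM z hz) (hM c (mem_ball_self hr))

theorem uniformCauchySeqOn_fderiv_half_ball (hr : 0 < r)
    (hd : ∀ i, DifferentiableOn ℂ (f i) (ball c r)) (hf : UniformCauchySeqOn f l (ball c r)) :
    UniformCauchySeqOn (fun i => fderiv ℂ (f i)) l (ball c (r / 2)) := by
  intro u hu
  obtain ⟨ε, hε, hεu⟩ := Metric.mem_uniformity_dist.1 hu
  have hδ : 0 < ε * r / 8 := by positivity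
  filter_upwards [hf _ (Metric.dist_mem_uniformity hδ)] with ⟨i, j⟩ hij y hy
  have hsub : ball y (r / 2) ⊆ ball c r := ball_subset_ball' (by linarith [mem_ball.1 hy])
  have hdiff (k : ι) : DifferentiableOn ℂ (f k) (ball y (r / 2)) := (hd k).mono hsub
  have hdiffAt (k : ι) : DifferentiableAt ℂ (f k) y :=
    (hdiff k).differentiableAt (ball_mem_nhds y (half_pos hr))
  have hbound : ∀ z ∈ ball y (r / 2), ‖(f i - f j) z‖ ≤ ε * r / 8 := fun z hz => by
    simpa only [Pi.sub_apply, dist_eq_norm] using (hij z (hsub hz)).le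
  refine hεu ?_
  rw [dist_eq_norm, ← fderiv_sub (hdiffAt i) (hdiffAt j)]
  calc ‖fderiv ℂ (f i - f j) y‖ ≤ 2 * (ε * r / 8) / (r / 2) :=
        norm_fderiv_le_of_forall_mem_ball_norm_le (half_pos hr) ((hdiff i).sub (hdiff j)) hbound
    _ = ε / 2 := by field_simp; norm_num
    _ < ε := half_lt_self hε

variable [CompleteSpace F] [l.NeBot]

theorem differentiableAt_of_tendstoUniformlyOn_ball (hr : 0 < r)
    (hd : ∀ i, DifferentiableOn ℂ (f i) (ball c r)) (hfg : TendstoUniformlyOn f g l (ball c r)) :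
    DifferentiableAt ℂ g c := by
  have hcauchy := uniformCauchySeqOn_fderiv_half_ball hr hd hfg.uniformCauchySeqOn
  have hlim : ∀ y ∈ ball c (r / 2), ∃ g', Tendsto (fun i => fderiv ℂ (f i) y) l (𝓝 g') :=
    fun y hy => CompleteSpace.complete (hcauchy.cauchy_map hy)
  choose! g' hg' using hlim
  have hsub : ball c (r / 2) ⊆ ball c r := ball_subset_ball (half_le_self hr.le)
  exact (hasFDerivAt_of_tendstoUniformlyOn isOpen_ball
    (hcauchy.tendstoUniformlyOn_of_tendsto hg')
    (fun i y hy => ((hd i).differentiableAt (isOpen_ball.mem_nhds (hsub hy))).hasFDerivAt)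
    (fun y hy => hfg.tendsto_at (hsub hy)) (mem_ball_self (half_pos hr))).differentiableAt

theorem differentiableOn_of_tendstoLocallyUniformlyOn [LocallyCompactSpace E] {U : Set E}
    (hU : IsOpen U) (hd : ∀ i, DifferentiableOn ℂ (f i) U)
    (hfg : TendstoLocallyUniformlyOn f g l U) : DifferentiableOn ℂ g U := by
  intro x hx
  obtain ⟨K, hK, hxK, hKU⟩ := exists_compact_subset hU hx
  obtain ⟨r, hr, hball⟩ := Metric.isOpen_iff.1 isOpen_interior x hxK
  have hballK : ball x r ⊆ K := hball.trans interior_subset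
  exact (differentiableAt_of_tendstoUniformlyOn_ball hr (fun i => (hd i).mono (hballK.trans hKU))
    (((tendstoLocallyUniformlyOn_iff_forall_isCompact hU).1 hfg K hKU hK).mono
      hballK)).differentiableWithinAt

end LocallyUniformLimits

section CondensationOfSingularities

open Bornology

variable {𝕜 X Y α : Type*} [NontriviallyNormedField 𝕜]
  [AddCommGroup X] [Module 𝕜 X] [TopologicalSpace X] [NormedAddCommGroup Y] [NormedSpace 𝕜 Y]

/-- The vectors at which the operators `T a`, `a ∈ C`, are pointwise bounded. -/
def pointwiseBoundedSubmodule (T : α → X →L[𝕜] Y) (C : Set α) : Submodule 𝕜 X where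
  carrier := {x | IsBounded ((T · x) '' C)}
  zero_mem' := by
    refine isBounded_singleton.subset (image_subset_iff.2 fun a _ => ?_) (t := {0})
    exact map_zero (T a)
  add_mem' {x y} hx hy := by
    refine (hx.add hy).subset (image_subset_iff.2 fun a ha => ?_)
    rw [mem_preimage, map_add]
    exact add_mem_add (mem_image_of_mem _ ha) (mem_image_of_mem _ ha)
  smul_mem' c x hx := by
    refine (hx.smul₀ c).subset (image_subset_iff.2 fun a ha => ?_)
    rw [mem_preimage, map_smul]
    exact smul_mem_smul_set (mem_image_of_mem _ ha)

theorem exists_forall_not_isBounded_image {ι : Type*} [Countable ι] [ContinuousAdd X]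
    [ContinuousSMul 𝕜 X] [BaireSpace X] (T : α → X →L[𝕜] Y) (C : ι → Set α)
    (h : ∀ i, ∃ x, ¬ IsBounded ((T · x) '' C i)) :
    ∃ x, ∀ i, ¬ IsBounded ((T · x) '' C i) := by
  by_contra! hcon
  let A : ι × ℕ → Set X := fun p => {x | ∀ a ∈ C p.1, ‖T a x‖ ≤ p.2}
  have hA_closed : ∀ p, IsClosed (A p) := fun p => by
    simp only [A, ofPred_forall]
    exact isClosed_biInter fun a _ => isClosed_le (T a).continuous.norm continuous_const
  have hA_cover : ⋃ p, A p = univ := by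
    refine eq_univ_of_forall fun x => ?_
    obtain ⟨i, hi⟩ := hcon x
    obtain ⟨M, hM⟩ := isBounded_iff_forall_norm_le.1 hi
    obtain ⟨N, hN⟩ := exists_nat_ge M
    exact mem_iUnion.2 ⟨(i, N), fun a ha => (hM _ (mem_image_of_mem _ ha)).trans hN⟩
  obtain ⟨⟨i, N⟩, hiN⟩ := nonempty_interior_of_iUnion_of_closed hA_closed hA_cover
  have hA_sub : A (i, N) ⊆ pointwiseBoundedSubmodule T (C i) := fun x hx =>
    isBounded_iff_forall_norm_le.2 ⟨N, forall_mem_image.2 hx⟩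
  have htop : pointwiseBoundedSubmodule T (C i) = ⊤ :=
    Submodule.eq_top_of_nonempty_interior' _ (hiN.mono (interior_mono hA_sub))
  obtain ⟨x, hx⟩ := h i
  exact hx (htop ▸ Submodule.mem_top : x ∈ pointwiseBoundedSubmodule T (C i))

end CondensationOfSingularities

section HolomorphicMaps

open Bornology

variable {E F : Type*} [NormedAddCommGroup E] [NormedSpace ℂ E]
  [NormedAddCommGroup F] [NormedSpace ℂ F]

variable (F) in
/-- The space of holomorphic maps `U → F`, as a subspace of `C(U, F)` so that it carries the
topology of locally uniform convergence. -/
def holomorphicMaps (U : Set E) : Submodule ℂ C(U, F) where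
  carrier := {φ | ∃ f : E → F, DifferentiableOn ℂ f U ∧ ∀ z : U, φ z = f z}
  zero_mem' := ⟨0, differentiableOn_const 0, fun _ => rfl⟩
  add_mem' := by
    rintro φ ψ ⟨f, hf, hφ⟩ ⟨g, hg, hψ⟩
    exact ⟨f + g, hf.add hg, fun z => congrArg₂ _ (hφ z) (hψ z)⟩
  smul_mem' := by
    rintro c φ ⟨f, hf, hφ⟩
    exact ⟨c • f, hf.const_smul c, fun z => congrArg _ (hφ z)⟩

variable [CompleteSpace F] [FiniteDimensional ℂ E] {U : Set E}

theorem isClosed_holomorphicMaps (hU : IsOpen U) :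
    IsClosed (holomorphicMaps F U : Set C(U, F)) := by
  have := FiniteDimensional.proper ℂ E
  have := hU.locallyCompactSpace
  refine IsSeqClosed.isClosed fun φ ψ hφ hφψ => ?_
  choose f hf hφf using hφ
  let g : E → F := Function.extend (↑) ψ 0
  have hψg (z : U) : ψ z = g z := (Subtype.val_injective.extend_apply ψ 0 z).symm
  refine ⟨g, differentiableOn_of_tendstoLocallyUniformlyOn (l := atTop) hU hf ?_, hψg⟩
  rw [tendstoLocallyUniformlyOn_iff_tendstoLocallyUniformly_comp_coe]
  convert ContinuousMap.tendsto_iff_tendstoLocallyUniformly.1 hφψ using 1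
  · ext n z
    exact (hφf n z).symm
  · ext z
    exact (hψg z).symm

theorem baireSpace_holomorphicMaps (hU : IsOpen U) : BaireSpace (holomorphicMaps F U) := by
  have := FiniteDimensional.proper ℂ E
  have := hU.locallyCompactSpace
  have := (isClosed_holomorphicMaps (F := F) hU).isCompletelyPseudoMetrizableSpace
  infer_instance

theorem exists_differentiableOn_forall_not_isBounded_image {ι : Type*} [Countable ι]
    (hU : IsOpen U) {C : ι → Set E} (hC : ∀ i, C i ⊆ U)
    (h : ∀ i, ∃ u : E → F, DifferentiableOn ℂ u U ∧ ¬ IsBounded (u '' C i)) :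
    ∃ f : E → F, DifferentiableOn ℂ f U ∧ ∀ i, ¬ IsBounded (f '' C i) := by
  have := baireSpace_holomorphicMaps (F := F) hU
  let eval (z : U) : holomorphicMaps F U →L[ℂ] F :=
    (ContinuousMap.evalCLM ℂ z).comp (holomorphicMaps F U).subtypeL
  have himage {φ : holomorphicMaps F U} {f : E → F} (hφ : ∀ z : U, φ.1 z = f z) (i : ι) :
      (eval · φ) '' ((↑) ⁻¹' C i) = f '' C i := by
    rw [show (eval · φ) = f ∘ (↑) from funext hφ, image_comp, Subtype.image_preimage_coe,
      inter_eq_right.2 (hC i)]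
  obtain ⟨⟨φ, f, hf, hφ⟩, hunb⟩ := exists_forall_not_isBounded_image eval
    (fun i => ((↑) : U → E) ⁻¹' C i) fun i => by
      obtain ⟨u, hu, hui⟩ := h i
      let ψ : C(U, F) := ⟨U.domRestrict u, hu.continuousOn.domRestrict⟩
      exact ⟨⟨ψ, u, hu, fun _ => rfl⟩, by rwa [himage fun _ => rfl]⟩
  exact ⟨f, hf, fun i => by simpa only [himage (φ := ⟨φ, f, hf, hφ⟩) hφ] using hunb i⟩

end HolomorphicMaps

section BoundaryComponents

variable {X : Type*} [TopologicalSpace X] [LocallyConnectedSpace X] {U : Set X}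

theorem exists_mem_frontier_inter_closure_connectedComponentIn (hU : IsOpen U) {V : Set X}
    (hV : IsOpen V) (hVc : IsPreconnected V) (hVU : ¬ V ⊆ U) {w : X} (hw : w ∈ U ∩ V) :
    ∃ b ∈ V, b ∈ frontier U ∩ closure (connectedComponentIn (U ∩ V) w) := by
  have hopen (x : X) : IsOpen (connectedComponentIn (U ∩ V) x) := (hU.inter hV).connectedComponentIn
  have hsubU : connectedComponentIn (U ∩ V) w ⊆ U :=
    (connectedComponentIn_subset _ _).trans inter_subset_left
  by_contra! hcon
  refine hVU ((hVc.subset_of_closure_inter_subset (hopen w)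
    ⟨w, hw.2, mem_connectedComponentIn hw⟩ ?_).trans hsubU)
  rintro b ⟨hb, hbV⟩
  have hbU : b ∈ U := by
    by_contra hbU
    exact hcon b hbV ⟨hU.frontier_eq ▸ ⟨closure_mono hsubU hb, hbU⟩, hb⟩
  have hb_self : b ∈ connectedComponentIn (U ∩ V) b := mem_connectedComponentIn ⟨hbU, hbV⟩
  obtain ⟨y, hyb, hyw⟩ := mem_closure_iff.1 hb _ (hopen b) hb_self
  rwa [connectedComponentIn_eq hyw, ← connectedComponentIn_eq hyb]

-- Take the components of `U ∩ D`, for `D` a component of a member of a countable basis.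
theorem exists_countable_subset_connectedComponentIn_inter [SecondCountableTopology X]
    (hU : IsOpen U) :
    ∃ 𝒞 : Set (Set X), 𝒞.Countable ∧
      (∀ C ∈ 𝒞, C ⊆ U ∧ (frontier U ∩ closure C).Nonempty) ∧
      ∀ V, IsOpen V → IsPreconnected V → ¬ V ⊆ U → ∀ w ∈ U ∩ V,
        ∃ b ∈ V, ∀ N ∈ 𝓝 b, ∃ C ∈ 𝒞, C ⊆ connectedComponentIn (U ∩ V) w ∩ N := by
  obtain ⟨s, hs, hs_dense⟩ := TopologicalSpace.exists_countable_dense X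
  let piece (p : X × Set X) : Set X :=
    connectedComponentIn (U ∩ connectedComponentIn p.2 p.1) p.1
  have hpiece (p : X × Set X) : piece p ⊆ U ∩ connectedComponentIn p.2 p.1 :=
    connectedComponentIn_subset _ _
  refine ⟨{C ∈ piece '' s ×ˢ TopologicalSpace.countableBasis X |
      (frontier U ∩ closure C).Nonempty},
    ((hs.prod (TopologicalSpace.countable_countableBasis X)).image piece).mono (sep_subset _ _),
    ?_, fun V hV hVc hVU w hw => ?_⟩
  · rintro _ ⟨⟨p, -, rfl⟩, hp⟩
    exact ⟨(hpiece p).trans inter_subset_left, hp⟩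
  obtain ⟨b, hbV, hb_frontier, hb⟩ :=
    exists_mem_frontier_inter_closure_connectedComponentIn hU hV hVc hVU hw
  refine ⟨b, hbV, fun N hN => ?_⟩
  obtain ⟨B, hB, hbB, hBN⟩ := (TopologicalSpace.isBasis_countableBasis X).mem_nhds_iff.1
    (Filter.inter_mem hN (hV.mem_nhds hbV))
  have hD : IsOpen (connectedComponentIn B b) :=
    (TopologicalSpace.isOpen_of_mem_countableBasis hB).connectedComponentIn
  obtain ⟨q, ⟨hqD, hqw⟩, hqs⟩ := hs_dense.inter_open_nonempty _
    (hD.inter (hU.inter hV).connectedComponentIn)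
    (mem_closure_iff.1 hb _ hD (mem_connectedComponentIn hbB))
  have hqU : q ∈ U := (connectedComponentIn_subset _ _ hqw).1
  have hDq : connectedComponentIn B b = connectedComponentIn B q := connectedComponentIn_eq hqD
  have hDB : connectedComponentIn B q ⊆ B := connectedComponentIn_subset _ _
  have hbD : b ∈ connectedComponentIn B q := hDq ▸ mem_connectedComponentIn hbB
  have hbU : b ∉ U := (hU.frontier_eq ▸ hb_frontier : b ∈ closure U \ U).2
  obtain ⟨a, -, ha⟩ := exists_mem_frontier_inter_closure_connectedComponentIn hU (hDq ▸ hD)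
    isPreconnected_connectedComponentIn (fun hDU => hbU (hDU hbD)) ⟨hqU, hDq ▸ hqD⟩
  refine ⟨piece (q, B), ⟨⟨(q, B), ⟨hqs, hB⟩, rfl⟩, a, ha⟩, subset_inter ?_ ?_⟩
  · rw [connectedComponentIn_eq hqw]
    exact connectedComponentIn_mono _
      (inter_subset_inter_right U (hDB.trans (hBN.trans inter_subset_right)))
  · exact (hpiece (q, B)).trans
      (inter_subset_right.trans (hDB.trans (hBN.trans inter_subset_left)))

end BoundaryComponents

section Nonextension

open Bornology

theorem not_isBounded_range_of_tendsto_cobounded {α β : Type*} [Bornology β] {l : Filter α}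
    [l.NeBot] {u : α → β} (hu : Tendsto u l (cobounded β)) : ¬ IsBounded (range u) := fun h => by
  obtain ⟨a, ha⟩ := (hu.eventually h).exists
  exact ha (mem_range_self a)

theorem isDomainOfHolomorphy_of_boundary_vanishing_general {E F : Type*} [NormedAddCommGroup E]
    [NormedSpace ℂ E] [FiniteDimensional ℂ E] [NormedAddCommGroup F] [NormedSpace ℂ F]
    [CompleteSpace F] {U : Set E} (hU : IsOpen U)
    (h : ∀ a ∈ frontier U, ∀ z : ℕ → E, (∀ j, z j ∈ U) → Tendsto z atTop (𝓝 a) →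
      ∃ u : E → F, DifferentiableOn ℂ u U ∧ ¬ IsBounded (range (u ∘ z))) :
    ∃ f : E → F, DifferentiableOn ℂ f U ∧
      ∀ V, IsOpen V → IsPreconnected V → ¬ V ⊆ U → ∀ w ∈ U ∩ V,
        ∀ g : E → F, DifferentiableOn ℂ g V → ¬ f =ᶠ[𝓝 w] g := by
  have := FiniteDimensional.proper ℂ E
  obtain ⟨𝒞, h𝒞, h𝒞U, h𝒞V⟩ := exists_countable_subset_connectedComponentIn_inter hU
  have := h𝒞.to_subtype
  obtain ⟨f, hf, hunb⟩ := exists_differentiableOn_forall_not_isBounded_image (F := F) hU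
    (C := ((↑) : 𝒞 → Set E)) (fun C => (h𝒞U C C.2).1) fun ⟨C, hC⟩ => by
      obtain ⟨hCU, a, ha, haC⟩ := h𝒞U C hC
      obtain ⟨z, hz, hza⟩ := mem_closure_iff_seq_limit.1 haC
      obtain ⟨u, hu, huz⟩ := h a ha z (fun j => hCU (hz j)) hza
      exact ⟨u, hu, fun hb => huz
        (hb.subset (range_subset_iff.2 fun j => mem_image_of_mem u (hz j)))⟩
  refine ⟨f, hf, fun V hV hVc hVU w hw g hg hfg => ?_⟩
  obtain ⟨b, hbV, hb⟩ := h𝒞V V hV hVc hVU w hw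
  have hgb : g ⁻¹' ball (g b) 1 ∈ 𝓝 b :=
    (hg.differentiableAt (hV.mem_nhds hbV)).continuousAt (ball_mem_nhds _ one_pos)
  obtain ⟨C, hC, hCsub⟩ := hb _ hgb
  have hcomp := connectedComponentIn_subset (U ∩ V) w
  have hEq : EqOn f g (connectedComponentIn (U ∩ V) w) :=
    eqOn_of_isPreconnected_of_eventuallyEq (hU.inter hV).connectedComponentIn
      isPreconnected_connectedComponentIn (hf.mono (hcomp.trans inter_subset_left))
      (hg.mono (hcomp.trans inter_subset_right)) (mem_connectedComponentIn hw) hfg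
  refine hunb ⟨C, hC⟩ ((isBounded_ball (x := g b) (r := 1)).subset
    (image_subset_iff.2 fun z hz => ?_))
  rw [mem_preimage, hEq (hCsub hz).1]
  exact (hCsub hz).2

end Nonextension

/-- If for every boundary point `a` of the domain `U` there is a nowhere-vanishing holomorphic
function on `U` tending to `0` at `a`, then `U` is a domain of holomorphy. -/
theorem isDomainOfHolomorphy_of_boundary_vanishing {n : ℕ} (U : Set (Fin n → ℂ))
    (hUo : IsOpen U) (hUc : IsConnected U)
    (h : ∀ a ∈ frontier U, ∃ g : (Fin n → ℂ) → ℂ, DifferentiableOn ℂ g U ∧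
      (∀ z ∈ U, g z ≠ 0) ∧
      ∀ z : ℕ → (Fin n → ℂ), (∀ j, z j ∈ U) → Tendsto z atTop (𝓝 a) →
        Tendsto (fun j => g (z j)) atTop (𝓝 0)) :
    IsDomainOfHolomorphy U := by
  obtain ⟨f, hf, hext⟩ := isDomainOfHolomorphy_of_boundary_vanishing_general hUo
    fun a ha z hz hza => by
      obtain ⟨g, hg, hg₀, hlim⟩ := h a ha
      exact ⟨g⁻¹, hg.inv hg₀, not_isBounded_range_of_tendsto_cobounded
        (Filter.tendsto_inv₀_nhdsNE_zero.comp (tendsto_nhdsWithin_iff.2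
          ⟨hlim z hz hza, .of_forall fun j => hg₀ _ (hz j)⟩))⟩
  refine ⟨hUo, hUc, f, hf, ?_⟩
  rintro a ha ⟨V, hV, hVc, haV, g, hg, W, hW, ⟨w, hw⟩, hWUV, hfg⟩
  exact hext V hV hVc.isPreconnected (fun hVU => ha (hVU haV)) w (hWUV hw) g hg
    (hfg.eventuallyEq_of_mem (hW.mem_nhds hw))
end

section
/- Every convex domain U ⊆ ℂⁿ (convex when regarded as a subset of ℝ^{2n}) is a domain of holomorphy. -/
open Set Metric Filter Topology

/-!
At each frontier point `b` of an open convex set `U` there is a complex functional `l` of norm one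
with `re l < re (l b)` on `U`. The function `1 / (l b - l z)` is holomorphic with positive real part
on `U`, its real part tends to infinity along segments ending at `b`, and its modulus at `z` is at
most the inverse of the distance from `z` to the complement of `U`. A series of such functions with
positive summable weights, over a countable dense set of frontier points, therefore converges to a
holomorphic function; as the real parts are positive, no cancellation occurs, so the sum has no
limit at any of these points.

If a holomorphic function on `U` extends to some point outside `U`, then by the identity theorem it
agrees on `U ∩ N` with a function holomorphic on a neighbourhood `N` of a frontier point, and so it
has a limit at every frontier point in `N`.
-/

section IdentityTheorem

variable {E F : Type*} [NormedAddCommGroup E] [NormedSpace ℂ E]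
  [NormedAddCommGroup F] [NormedSpace ℂ F]

theorem eqOn_of_convex_of_eventuallyEq_s3 [CompleteSpace F] {U : Set E} (hUo : IsOpen U)
    (hU : Convex ℝ U) {f g : E → F} (hf : DifferentiableOn ℂ f U) (hg : DifferentiableOn ℂ g U)
    {y : E} (hy : y ∈ U) (hfg : f =ᶠ[𝓝 y] g) : EqOn f g U := by
  intro z hz
  let L : ℂ →ᵃ[ℂ] E := AffineMap.lineMap y z
  have hL : Differentiable ℂ L := fun _ => AffineMap.hasDerivAt_lineMap.differentiableAt
  have hLo : IsOpen (L ⁻¹' U) := hUo.preimage hL.continuous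
  have hLc : Convex ℝ (L ⁻¹' U) :=
    hU.affine_preimage ⟨L, L.linear.restrictScalars ℝ, L.map_vadd⟩
  have hL0 : L 0 = y := AffineMap.lineMap_apply_zero y z
  have hL1 : L 1 = z := AffineMap.lineMap_apply_one y z
  have analytic_comp {h : E → F} (hh : DifferentiableOn ℂ h U) :
      AnalyticOnNhd ℂ (h ∘ L) (L ⁻¹' U) :=
    (hh.comp hL.differentiableOn (mapsTo_preimage L U)).analyticOnNhd hLo
  have hfg0 : f ∘ L =ᶠ[𝓝 0] g ∘ L :=
    (hL.continuous.tendsto' 0 y hL0).eventually hfg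
  have hfg1 : (f ∘ L) 1 = (g ∘ L) 1 :=
    (analytic_comp hf).eqOn_of_preconnected_of_eventuallyEq (analytic_comp hg) hLc.isPreconnected
      (by rwa [mem_preimage, hL0]) hfg0 (by rwa [mem_preimage, hL1])
  simpa only [Function.comp_apply, hL1] using hfg1

/-- Holomorphic extension of `f` from `U` to the point `a`, as in `ExtendsHolomorphicallyTo`, for
functions between complex normed spaces. -/
def HasHolomorphicExtensionAt (U : Set E) (f : E → F) (a : E) : Prop :=
  ∃ V : Set E, IsOpen V ∧ IsConnected V ∧ a ∈ V ∧
    ∃ g : E → F, DifferentiableOn ℂ g V ∧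
      ∃ W : Set E, IsOpen W ∧ W.Nonempty ∧ W ⊆ U ∩ V ∧ EqOn f g W

variable [CompleteSpace F] {U : Set E} {f : E → F} {a : E}

theorem HasHolomorphicExtensionAt.exists_ball_frontier (hUo : IsOpen U) (hU : Convex ℝ U)
    (hf : DifferentiableOn ℂ f U) (ha : a ∉ U) (h : HasHolomorphicExtensionAt U f a) :
    ∃ c ∈ frontier U, ∃ ε > 0, ∃ g : E → F, DifferentiableOn ℂ g (ball c ε) ∧
      EqOn f g (U ∩ ball c ε) := by
  obtain ⟨V, hVo, hVc, haV, g, hg, W, hWo, ⟨w, hw⟩, hWUV, hfg⟩ := h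
  let A : Set E := {x | x ∈ U ∩ V ∧ f =ᶠ[𝓝 x] g}
  have hAo : IsOpen A := (hUo.inter hVo).inter isOpen_setOfPred_eventually_nhds
  have hwA : w ∈ A := ⟨hWUV hw, hfg.eventuallyEq_of_mem (hWo.mem_nhds hw)⟩
  obtain ⟨c, ⟨hcA, hcV⟩, hcnA⟩ : ∃ c ∈ closure A ∩ V, c ∉ A := by
    by_contra! hclosed
    have hVA : V ⊆ A := hVc.isPreconnected.subset_of_closure_inter_subset hAo
      ⟨w, (hWUV hw).2, hwA⟩ hclosed
    exact ha (hVA haV).1.1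
  obtain ⟨ε, hε, hεV⟩ := Metric.isOpen_iff.1 hVo c hcV
  obtain ⟨y, hyc, hyA⟩ := mem_closure_iff.1 hcA _ isOpen_ball (mem_ball_self hε)
  have hUBo : IsOpen (U ∩ ball c ε) := hUo.inter isOpen_ball
  have hfgB : EqOn f g (U ∩ ball c ε) :=
    eqOn_of_convex_of_eventuallyEq_s3 hUBo (hU.inter (convex_ball c ε)) (hf.mono inter_subset_left)
      (hg.mono (inter_subset_right.trans hεV)) ⟨hyA.1.1, hyc⟩ hyA.2
  have hcU : c ∉ U := fun hcU => hcnA ⟨⟨hcU, hcV⟩,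
    hfgB.eventuallyEq_of_mem (hUBo.mem_nhds ⟨hcU, mem_ball_self hε⟩)⟩
  have hcc : c ∈ closure U := closure_mono (fun _ hx => hx.1.1) hcA
  exact ⟨c, hUo.frontier_eq ▸ ⟨hcc, hcU⟩, ε, hε, g, hg.mono hεV, hfgB⟩

theorem not_hasHolomorphicExtensionAt_of_dense_frontier (hUo : IsOpen U) (hU : Convex ℝ U)
    (hf : DifferentiableOn ℂ f U) {D : Set E} (hD : frontier U ⊆ closure D)
    (hlim : ∀ b ∈ D, ∀ y, ¬ Tendsto f (𝓝[U] b) (𝓝 y)) (ha : a ∉ U) :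
    ¬ HasHolomorphicExtensionAt U f a := by
  intro hext
  obtain ⟨c, hc, ε, hε, g, hg, hfg⟩ := hext.exists_ball_frontier hUo hU hf ha
  obtain ⟨b, hb, hbD⟩ := mem_closure_iff.1 (hD hc) _ isOpen_ball (mem_ball_self hε)
  have hball : ball c ε ∈ 𝓝 b := isOpen_ball.mem_nhds hb
  have hgb : Tendsto g (𝓝[U] b) (𝓝 (g b)) :=
    (hg.differentiableAt hball).continuousAt.continuousWithinAt
  have hgf : g =ᶠ[𝓝[U] b] f := by
    filter_upwards [self_mem_nhdsWithin, mem_nhdsWithin_of_mem_nhds hball] with x hxU hxB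
    exact (hfg ⟨hxU, hxB⟩).symm
  exact hlim b hbD (g b) (hgb.congr' hgf)

end IdentityTheorem

theorem tendsto_lineMap_nhdsWithin_of_convex {E : Type*} [AddCommGroup E] [Module ℝ E]
    [TopologicalSpace E] [IsTopologicalAddGroup E] [ContinuousSMul ℝ E] {U : Set E}
    (hU : Convex ℝ U) {b p : E} (hb : b ∈ closure U) (hp : p ∈ interior U) :
    Tendsto (AffineMap.lineMap b p : ℝ → E) (𝓝[>] 0) (𝓝[U] b) := by
  refine tendsto_nhdsWithin_iff.2 ⟨?_, ?_⟩
  · exact (AffineMap.lineMap_continuous.tendsto' 0 b (AffineMap.lineMap_apply_zero b p)).mono_left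
      nhdsWithin_le_nhds
  · filter_upwards [Ioc_mem_nhdsGT one_pos] with t ht
    rw [AffineMap.lineMap_apply_module', add_comm]
    exact interior_subset (hU.add_smul_sub_mem_interior' hb hp ht)

section SupportingFunctional

variable {E : Type*} [NormedAddCommGroup E]

theorem re_apply_add_mul_norm_le {𝕜 : Type*} [RCLike 𝕜] [NormedSpace 𝕜 E] {l : StrongDual 𝕜 E}
    {z : E} {r c : ℝ} (hr : 0 < r) (h : ∀ x ∈ closedBall z r, RCLike.re (l x) ≤ c) :
    RCLike.re (l z) + r * ‖l‖ ≤ c := by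
  have hnorm : ‖l‖ ≤ (c - RCLike.re (l z)) / r := by
    refine ContinuousLinearMap.opNorm_bound_of_ball_bound hr _ l fun v hv => ?_
    obtain ⟨ω, hω, hωv⟩ := RCLike.exists_norm_eq_mul_self (l v)
    have hmem : z + ω • v ∈ closedBall z r := by
      simpa [mem_closedBall, dist_eq_norm, norm_smul, hω] using hv
    have hre : RCLike.re (l (z + ω • v)) = RCLike.re (l z) + ‖l v‖ := by
      rw [map_add, map_smul, smul_eq_mul, ← hωv, map_add, RCLike.ofReal_re]
    linarith [h _ hmem]
  rw [le_div_iff₀ hr] at hnorm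
  linarith

variable [NormedSpace ℂ E] {U : Set E} {b x : E} {l : StrongDual ℂ E}

/-- A complex functional whose real part strictly supports `U` at `b`. It is normalized to have norm
one, so that `re (l (b - x))` is at least the distance from `x ∈ U` to the complement of `U`. -/
structure IsUnitSupport (U : Set E) (b : E) (l : StrongDual ℂ E) : Prop where
  norm_eq_one : ‖l‖ = 1
  re_lt : ∀ x ∈ U, (l x).re < (l b).re

theorem exists_isUnitSupport (hUo : IsOpen U) (hU : Convex ℝ U) (hb : b ∈ frontier U) :
    ∃ l, IsUnitSupport U b l := by
  rw [hUo.frontier_eq] at hb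
  obtain ⟨l, hl⟩ := RCLike.geometric_hahn_banach_open_point (𝕜 := ℂ) hU hUo hb.2
  obtain ⟨p, hp⟩ := closure_nonempty_iff.1 ⟨b, hb.1⟩
  have hl0 : l ≠ 0 := by
    rintro rfl
    simpa using hl p hp
  have hpos : 0 < ‖l‖⁻¹ := inv_pos.2 (norm_pos_iff.2 hl0)
  refine ⟨‖l‖⁻¹ • l, ?_, fun x hx => ?_⟩
  · rw [norm_smul, norm_inv, norm_norm, inv_mul_cancel₀ (norm_ne_zero_iff.2 hl0)]
  · simpa using mul_lt_mul_of_pos_left (hl x hx) hpos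

namespace IsUnitSupport

theorem re_apply_sub_pos (h : IsUnitSupport U b l) (hx : x ∈ U) : 0 < (l (b - x)).re := by
  rw [map_sub, Complex.sub_re]
  exact sub_pos.2 (h.re_lt x hx)

theorem apply_sub_ne_zero (h : IsUnitSupport U b l) (hx : x ∈ U) : l (b - x) ≠ 0 :=
  fun h0 => (h.re_apply_sub_pos hx).ne' (by rw [h0, Complex.zero_re])

theorem re_inv_apply_sub_pos (h : IsUnitSupport U b l) (hx : x ∈ U) :
    0 < (l (b - x))⁻¹.re := by
  rw [Complex.inv_re]
  exact div_pos (h.re_apply_sub_pos hx) (Complex.normSq_pos.2 (h.apply_sub_ne_zero hx))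

theorem norm_inv_apply_sub_le (h : IsUnitSupport U b l) {r : ℝ} (hr : 0 < r)
    (hxr : closedBall x r ⊆ U) : ‖(l (b - x))⁻¹‖ ≤ r⁻¹ := by
  have hle : (l x).re + r * ‖l‖ ≤ (l b).re :=
    re_apply_add_mul_norm_le (𝕜 := ℂ) hr fun y hy => (h.re_lt y (hxr hy)).le
  rw [norm_inv]
  refine inv_anti₀ hr ?_
  calc r ≤ (l (b - x)).re := by
        rw [h.norm_eq_one, mul_one] at hle
        rw [map_sub, Complex.sub_re]
        linarith
    _ ≤ ‖l (b - x)‖ := Complex.re_le_norm _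

theorem tendsto_re_inv_apply_sub_lineMap (h : IsUnitSupport U b l) {p : E} (hp : p ∈ U) :
    Tendsto (fun t : ℝ => (l (b - AffineMap.lineMap b p t))⁻¹.re) (𝓝[>] 0) atTop := by
  have hline (t : ℝ) :
      (l (b - AffineMap.lineMap b p t))⁻¹.re = t⁻¹ * (l (b - p))⁻¹.re := by
    have hsub : b - AffineMap.lineMap b p t = t • (b - p) := by
      rw [AffineMap.lineMap_apply_module']
      module
    rw [hsub, l.map_smul_of_tower, smul_inv₀, Complex.smul_re, smul_eq_mul]
  simp only [hline]
  exact tendsto_inv_nhdsGT_zero.atTop_mul_const (h.re_inv_apply_sub_pos hp)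

end IsUnitSupport

end SupportingFunctional

section PoleSeries

variable {ι E : Type*} [NormedAddCommGroup E] [NormedSpace ℂ E] {U : Set E} {x : E}
  {u : ι → ℝ} {b : ι → E} {l : ι → StrongDual ℂ E}

/-- The weighted sum of the functions `z ↦ 1 / l i (b i - z)`, each of which has its poles on the
complex hyperplane through `b i` parallel to the kernel of `l i`. -/
noncomputable def poleSeries (u : ι → ℝ) (b : ι → E) (l : ι → StrongDual ℂ E) (z : E) : ℂ :=
  ∑' i, u i • (l i (b i - z))⁻¹

theorem hasFDerivAt_inv_apply_sub {𝕜 V : Type*} [NontriviallyNormedField 𝕜]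
    [NormedAddCommGroup V] [NormedSpace 𝕜 V] {l : StrongDual 𝕜 V} {b x : V}
    (h : l (b - x) ≠ 0) :
    HasFDerivAt (fun z => (l (b - z))⁻¹) ((l (b - x))⁻¹ ^ 2 • l) x := by
  have hsub : HasFDerivAt (fun z => l (b - z)) (-l) x := by
    simpa [Function.comp_def] using l.hasFDerivAt.comp x ((hasFDerivAt_id x).const_sub b)
  simpa [Function.comp_def] using (hasDerivAt_inv h).comp_hasFDerivAt x hsub

theorem summable_smul_inv_apply_sub (hUo : IsOpen U) (hl : ∀ i, IsUnitSupport U (b i) (l i))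
    (hu : Summable u) (hx : x ∈ U) : Summable fun i => u i • (l i (b i - x))⁻¹ := by
  obtain ⟨r, hr, hrU⟩ := nhds_basis_closedBall.mem_iff.1 (hUo.mem_nhds hx)
  refine .of_norm_bounded (hu.norm.mul_right r⁻¹) fun i => ?_
  rw [norm_smul]
  gcongr
  exact (hl i).norm_inv_apply_sub_le hr hrU

theorem differentiableOn_poleSeries (hUo : IsOpen U) (hl : ∀ i, IsUnitSupport U (b i) (l i))
    (hu : Summable u) : DifferentiableOn ℂ (poleSeries u b l) U := by
  intro x hx
  obtain ⟨r, hr, hrU⟩ := nhds_basis_closedBall.mem_iff.1 (hUo.mem_nhds hx)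
  have hr2 : 0 < r / 2 := half_pos hr
  have hsub : ∀ y ∈ ball x (r / 2), closedBall y (r / 2) ⊆ U := fun y hy =>
    (closedBall_subset_closedBall' (by linarith [mem_ball.1 hy])).trans hrU
  have hderiv : ∀ i, ∀ y ∈ ball x (r / 2), HasFDerivAt (fun z => u i • (l i (b i - z))⁻¹)
      (u i • (l i (b i - y))⁻¹ ^ 2 • l i) y := fun i y hy =>
    (hasFDerivAt_inv_apply_sub ((hl i).apply_sub_ne_zero
      (hsub y hy (mem_closedBall_self hr2.le)))).const_smul (u i)
  have hbound : ∀ i, ∀ y ∈ ball x (r / 2),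
      ‖u i • (l i (b i - y))⁻¹ ^ 2 • l i‖ ≤ ‖u i‖ * (r / 2)⁻¹ ^ 2 := by
    intro i y hy
    rw [norm_smul, norm_smul, norm_pow, (hl i).norm_eq_one, mul_one]
    gcongr
    exact (hl i).norm_inv_apply_sub_le hr2 (hsub y hy)
  exact (hasFDerivAt_tsum_of_isPreconnected (hu.norm.mul_right _) isOpen_ball
    (convex_ball x (r / 2)).isPreconnected hderiv hbound (mem_ball_self hr2)
    (summable_smul_inv_apply_sub hUo hl hu hx)
    (mem_ball_self hr2)).differentiableAt.differentiableWithinAt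

theorem mul_re_inv_apply_sub_le_re_poleSeries (hUo : IsOpen U)
    (hl : ∀ i, IsUnitSupport U (b i) (l i)) (hu : Summable u) (hu0 : ∀ i, 0 ≤ u i) (i : ι)
    (hx : x ∈ U) : u i * (l i (b i - x))⁻¹.re ≤ (poleSeries u b l x).re := by
  have hsum : HasSum (fun j => u j * (l j (b j - x))⁻¹.re) (poleSeries u b l x).re := by
    simpa only [Complex.smul_re, smul_eq_mul] using!
      Complex.hasSum_re (summable_smul_inv_apply_sub hUo hl hu hx).hasSum
  exact le_hasSum hsum i fun j _ => mul_nonneg (hu0 j) ((hl j).re_inv_apply_sub_pos hx).le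

theorem not_tendsto_poleSeries (hUo : IsOpen U) (hU : Convex ℝ U)
    (hl : ∀ i, IsUnitSupport U (b i) (l i)) (hu : Summable u) (hu0 : ∀ i, 0 ≤ u i) {i : ι}
    (hui : 0 < u i) (hb : b i ∈ closure U) (y : ℂ) :
    ¬ Tendsto (poleSeries u b l) (𝓝[U] (b i)) (𝓝 y) := by
  intro hy
  obtain ⟨p, hp⟩ := closure_nonempty_iff.1 ⟨b i, hb⟩
  have hline : Tendsto (AffineMap.lineMap (b i) p : ℝ → E) (𝓝[>] 0) (𝓝[U] (b i)) :=
    tendsto_lineMap_nhdsWithin_of_convex hU hb (by rwa [hUo.interior_eq])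
  have hre : Tendsto (fun t : ℝ => (poleSeries u b l (AffineMap.lineMap (b i) p t)).re)
      (𝓝[>] 0) (𝓝 y.re) :=
    (Complex.continuous_re.tendsto y).comp (hy.comp hline)
  refine not_tendsto_nhds_of_tendsto_atTop (tendsto_atTop_mono' _ ?_
    (((hl i).tendsto_re_inv_apply_sub_lineMap hp).const_mul_atTop hui)) y.re hre
  filter_upwards [hline self_mem_nhdsWithin] with t ht
  exact mul_re_inv_apply_sub_le_re_poleSeries hUo hl hu hu0 i ht

end PoleSeries

theorem convex_isDomainOfHolomorphy_general {E : Type*} [NormedAddCommGroup E] [NormedSpace ℂ E]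
    [TopologicalSpace.SeparableSpace E] {U : Set E} (hUo : IsOpen U) (hU : Convex ℝ U) :
    ∃ f : E → ℂ, DifferentiableOn ℂ f U ∧ ∀ a ∈ Uᶜ, ¬ HasHolomorphicExtensionAt U f a := by
  obtain ⟨D, hDU, hD, hdense⟩ :=
    (TopologicalSpace.IsSeparable.of_separableSpace (frontier U)).exists_countable_dense_subset
  have : Encodable D := hD.toEncodable
  choose l hl using fun b : D => exists_isUnitSupport hUo hU (hDU b.2)
  let u : D → ℝ := fun b => (1 / 2) ^ Encodable.encode b
  have hu : Summable u := summable_geometric_two_encode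
  have hupos (b : D) : 0 < u b := by positivity
  have hf : DifferentiableOn ℂ (poleSeries u (↑) l) U := differentiableOn_poleSeries hUo hl hu
  refine ⟨poleSeries u (↑) l, hf, fun a ha => ?_⟩
  refine not_hasHolomorphicExtensionAt_of_dense_frontier hUo hU hf hdense (fun b hb => ?_) ha
  exact not_tendsto_poleSeries hUo hU hl hu (fun b => (hupos b).le) (hupos ⟨b, hb⟩)
    (frontier_subset_closure (hDU hb))

/-- Every convex domain `U ⊆ ℂⁿ` (convex as a subset of the underlying real vector space,
i.e. of `ℝ^{2n}`) is a domain of holomorphy. -/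
theorem convex_isDomainOfHolomorphy {n : ℕ} (U : Set (Fin n → ℂ))
    (hUo : IsOpen U) (hUc : IsConnected U) (hconv : Convex ℝ U) :
    IsDomainOfHolomorphy U :=
  ⟨hUo, hUc, convex_isDomainOfHolomorphy_general hUo hconv⟩
end
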